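/- Let n ≥ 1, let c < d be real numbers, let B, B₁ : [c,d] → ℂ^{2n×2n} be continuous with B(x) and B₁(x) Hermitian for every x, and let μ ∈ ℂ with τ := Im μ ≠ 0. Suppose Φ : [c,d] → ℂ^{2n×2n} is continuously differentiable with J Φ'(x) = (B(x) + μ B₁(x)) Φ(x) on [c,d]. Define 𝒜(x) := (1/(2τ)) Φ(x)* (J/i) Φ(x). Then 𝒜(x) is Hermitian for every x ∈ [c,d], and 𝒜'(x) = Φ(x)* B₁(x) Φ(x) for every x; in particular, if B₁(x) is positive semidefinite for every x, then 𝒜(x₂) − 𝒜(x₁) is positive semidefinite whenever c ≤ x₁ ≤ x₂ ≤ d. -/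

import Mathlib

open Matrix
open scoped ComplexOrder

/-- The standard `2n × 2n` complex symplectic matrix `J = [[0, -Iₙ],[Iₙ, 0]]`,
with `ℂ^{2n}` realized as functions on `Fin n ⊕ Fin n`. -/
noncomputable def symJ (n : ℕ) : Matrix (Fin n ⊕ Fin n) (Fin n ⊕ Fin n) ℂ :=
  Matrix.fromBlocks 0 (-1) 1 0

/-!
For a solution of `J Φ' = S Φ` with `J* = -J`, the product rule and the equation give
`(Φ* J Φ)' = Φ* (S - S*) Φ`. When `S = B + μ B₁` with `B`, `B₁` Hermitian, the part `B` drops out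
and `S - S* = (μ - conj μ) B₁ = 2i (Im μ) B₁`, so the normalization `1 / (2 i Im μ)` leaves exactly
`Φ* B₁ Φ`. Monotonicity is then the real mean value theorem applied to each quadratic form
`v* 𝒜 v`, which is real because `𝒜` is Hermitian.
-/

section EntrywiseDerivative

variable {𝕜 R m n p : Type*} [NontriviallyNormedField 𝕜] [NormedRing R] [NormedAlgebra 𝕜 R]
  {s : Set 𝕜} {x : 𝕜}

theorem hasDerivWithinAt_matrix_mul_apply [Fintype n]
    {F : 𝕜 → Matrix m n R} {F' : Matrix m n R} {G : 𝕜 → Matrix n p R} {G' : Matrix n p R}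
    (hF : ∀ i j, HasDerivWithinAt (fun t => F t i j) (F' i j) s x)
    (hG : ∀ i j, HasDerivWithinAt (fun t => G t i j) (G' i j) s x) (i : m) (j : p) :
    HasDerivWithinAt (fun t => (F t * G t) i j) ((F' * G x + F x * G') i j) s x := by
  simp only [Matrix.add_apply, mul_apply, ← Finset.sum_add_distrib]
  exact .fun_sum fun k _ => (hF i k).fun_mul (hG k j)

theorem hasDerivWithinAt_dotProduct_mulVec [Fintype m] [Fintype n]
    {F : 𝕜 → Matrix m n R} {F' : Matrix m n R}
    (hF : ∀ i j, HasDerivWithinAt (fun t => F t i j) (F' i j) s x) (u : m → R) (v : n → R) :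
    HasDerivWithinAt (fun t => u ⬝ᵥ F t *ᵥ v) (u ⬝ᵥ F' *ᵥ v) s x := by
  simp only [dotProduct, mulVec]
  exact .fun_sum fun i _ => .const_mul _ (.fun_sum fun j _ => (hF i j).mul_const _)

theorem hasDerivWithinAt_conjTranspose_mul_mul_apply [StarRing 𝕜] [TrivialStar 𝕜] [StarRing R]
    [StarModule 𝕜 R] [ContinuousStar R] [Fintype m] (K : Matrix m m R)
    {F : 𝕜 → Matrix m n R} {F' : Matrix m n R}
    (hF : ∀ i j, HasDerivWithinAt (fun t => F t i j) (F' i j) s x) (i j : n) :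
    HasDerivWithinAt (fun t => ((F t)ᴴ * K * F t) i j)
      ((F'ᴴ * K * F x + (F x)ᴴ * K * F') i j) s x := by
  have hFK : ∀ i j, HasDerivWithinAt (fun t => ((F t)ᴴ * K) i j) ((F'ᴴ * K) i j) s x := by
    intro i j
    simpa using hasDerivWithinAt_matrix_mul_apply (F := fun t => (F t)ᴴ) (G := fun _ => K)
      (F' := F'ᴴ) (G' := 0) (fun i j => (hF j i).star) (fun _ _ => hasDerivWithinAt_const ..) i j
  exact hasDerivWithinAt_matrix_mul_apply hFK hF i j

end EntrywiseDerivative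

open scoped MatrixOrder in
theorem monotoneOn_matrix_of_hasDerivWithinAt_posSemidef {𝕜 ι : Type*} [RCLike 𝕜] [Finite ι]
    {s : Set ℝ} (hs : Convex ℝ s) {A A' : ℝ → Matrix ι ι 𝕜}
    (hA : ∀ x ∈ s, (A x).IsHermitian)
    (hA' : ∀ x ∈ s, ∀ i j, HasDerivWithinAt (fun t => A t i j) (A' x i j) s x)
    (hpos : ∀ x ∈ interior s, (A' x).PosSemidef) : MonotoneOn A s := by
  cases nonempty_fintype ι
  intro x₁ hx₁ x₂ hx₂ h
  have hsub : (A x₂ - A x₁).IsHermitian := (hA x₂ hx₂).sub (hA x₁ hx₁)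
  refine .of_dotProduct_mulVec_nonneg hsub fun v => RCLike.nonneg_iff.mpr ⟨?_, ?_⟩
  · have hderiv : ∀ x ∈ s, HasDerivWithinAt (fun t => RCLike.re (star v ⬝ᵥ A t *ᵥ v))
        (RCLike.re (star v ⬝ᵥ A' x *ᵥ v)) s x := fun x hx =>
      (RCLike.reCLM (K := 𝕜)).hasFDerivAt.comp_hasDerivWithinAt x
        (hasDerivWithinAt_dotProduct_mulVec (hA' x hx) (star v) v)
    have hmono : MonotoneOn (fun t => RCLike.re (star v ⬝ᵥ A t *ᵥ v)) s :=
      monotoneOn_of_hasDerivWithinAt_nonneg hs (fun x hx => (hderiv x hx).continuousWithinAt)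
        (fun x hx => (hderiv x (interior_subset hx)).mono interior_subset)
        (fun x hx => (hpos x hx).re_dotProduct_nonneg v)
    simpa [sub_mulVec, dotProduct_sub] using hmono hx₁ hx₂ h
  · exact hsub.im_star_dotProduct_mulVec_self v

theorem conjTranspose_symJ (n : ℕ) : (symJ n)ᴴ = -symJ n := by
  simp [symJ, fromBlocks_conjTranspose, fromBlocks_neg]

/-- Differentiated form of the Lagrange identity, with `G` in the role of the derivative of `F`. -/
theorem conjTranspose_mul_mul_add_eq {R m n : Type*} [Ring R] [StarRing R] [Fintype m]
    {J S : Matrix m m R} {F G : Matrix m n R} (hJ : Jᴴ = -J) (hG : J * G = S * F) :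
    Gᴴ * J * F + Fᴴ * J * G = Fᴴ * (S - Sᴴ) * F := by
  have hG' : Gᴴ * J = -(Fᴴ * Sᴴ) := by
    rw [← conjTranspose_mul, ← hG, conjTranspose_mul, hJ, Matrix.mul_neg, neg_neg]
  rw [hG', Matrix.mul_assoc Fᴴ J, hG, Matrix.mul_sub, Matrix.sub_mul, Matrix.neg_mul,
    Matrix.mul_assoc Fᴴ S, neg_add_eq_sub]

theorem add_smul_sub_conjTranspose {m : Type*} {B B₁ : Matrix m m ℂ} (hB : B.IsHermitian)
    (hB₁ : B₁.IsHermitian) (μ : ℂ) :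
    (B + μ • B₁) - (B + μ • B₁)ᴴ = (2 * (μ.im : ℂ) * Complex.I) • B₁ := by
  have hμ : μ - star μ = 2 * (μ.im : ℂ) * Complex.I := by
    simpa using Complex.sub_conj μ
  rw [conjTranspose_add, conjTranspose_smul, hB.eq, hB₁.eq, add_sub_add_left_eq_sub, ← sub_smul, hμ]

section NiessenMatrix

variable {ι κ : Type*} [Fintype ι] {J : Matrix ι ι ℂ}

/-- The value `(1 / (2 Im μ)) F* (J / i) F` of Niessen's matrix at a point where the matrix of
solutions takes the value `F`. Here `J` is arbitrary and `F` may have any number of columns. It is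
the junk value `0` when `Im μ = 0`. -/
noncomputable def niessenMatrix (J : Matrix ι ι ℂ) (μ : ℂ) (F : Matrix ι κ ℂ) : Matrix κ κ ℂ :=
  (1 / (2 * (μ.im : ℂ))) • (Fᴴ * (Complex.I⁻¹ • J) * F)

theorem isHermitian_niessenMatrix (hJ : Jᴴ = -J) (μ : ℂ) (F : Matrix ι κ ℂ) :
    (niessenMatrix J μ F).IsHermitian := by
  have hJI : (Complex.I⁻¹ • J).IsHermitian := by
    simp [IsHermitian, hJ]
  exact (isHermitian_conjTranspose_mul_mul F hJI).smul (by simp [isSelfAdjoint_iff])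

theorem hasDerivWithinAt_niessenMatrix_apply (hJ : Jᴴ = -J) {B B₁ : Matrix ι ι ℂ}
    (hB : B.IsHermitian) (hB₁ : B₁.IsHermitian) {μ : ℂ} (hμ : μ.im ≠ 0)
    {s : Set ℝ} {x : ℝ} {Φ : ℝ → Matrix ι κ ℂ} {Φ' : Matrix ι κ ℂ}
    (hΦ : ∀ i j, HasDerivWithinAt (fun t => Φ t i j) (Φ' i j) s x)
    (hode : J * Φ' = (B + μ • B₁) * Φ x) (i j : κ) :
    HasDerivWithinAt (fun t => niessenMatrix J μ (Φ t) i j) (((Φ x)ᴴ * B₁ * Φ x) i j) s x := by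
  have hscalar : 1 / (2 * (μ.im : ℂ)) * (Complex.I⁻¹ * (2 * μ.im * Complex.I)) = 1 := by
    have : (μ.im : ℂ) ≠ 0 := Complex.ofReal_ne_zero.mpr hμ
    field_simp
  have hvalue : (Φ x)ᴴ * B₁ * Φ x = (1 / (2 * (μ.im : ℂ))) •
      (Φ'ᴴ * (Complex.I⁻¹ • J) * Φ x + (Φ x)ᴴ * (Complex.I⁻¹ • J) * Φ') := by
    simp only [Matrix.mul_smul, Matrix.smul_mul, ← smul_add,
      conjTranspose_mul_mul_add_eq hJ hode, add_smul_sub_conjTranspose hB hB₁, smul_smul]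
    rw [hscalar, one_smul]
  rw [hvalue]
  exact (hasDerivWithinAt_conjTranspose_mul_mul_apply _ hΦ i j).const_mul _

open scoped MatrixOrder in
theorem niessen_matrix_monotone_general [Finite κ] (hJ : Jᴴ = -J)
    {s : Set ℝ} (hs : Convex ℝ s) {B B₁ : ℝ → Matrix ι ι ℂ} {μ : ℂ} (hμ : μ.im ≠ 0)
    {Φ Φ' : ℝ → Matrix ι κ ℂ} (hB : ∀ x ∈ s, (B x).IsHermitian)
    (hB₁ : ∀ x ∈ s, (B₁ x).IsHermitian)
    (hΦ : ∀ x ∈ s, ∀ i j, HasDerivWithinAt (fun t => Φ t i j) (Φ' x i j) s x)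
    (hode : ∀ x ∈ s, J * Φ' x = (B x + μ • B₁ x) * Φ x) :
    (∀ x, (niessenMatrix J μ (Φ x)).IsHermitian)
    ∧ (∀ x ∈ s, ∀ i j, HasDerivWithinAt (fun t => niessenMatrix J μ (Φ t) i j)
        (((Φ x)ᴴ * B₁ x * Φ x) i j) s x)
    ∧ ((∀ x ∈ interior s, (B₁ x).PosSemidef) →
        MonotoneOn (fun x => niessenMatrix J μ (Φ x)) s) := by
  have hherm (x : ℝ) : (niessenMatrix J μ (Φ x)).IsHermitian :=
    isHermitian_niessenMatrix hJ μ (Φ x)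
  have hderiv : ∀ x ∈ s, ∀ i j, HasDerivWithinAt (fun t => niessenMatrix J μ (Φ t) i j)
      (((Φ x)ᴴ * B₁ x * Φ x) i j) s x := fun x hx =>
    hasDerivWithinAt_niessenMatrix_apply hJ (hB x hx) (hB₁ x hx) hμ (hΦ x hx) (hode x hx)
  exact ⟨hherm, hderiv, fun hpos =>
    monotoneOn_matrix_of_hasDerivWithinAt_posSemidef hs (fun x _ => hherm x) hderiv
      fun x hx => (hpos x hx).conjTranspose_mul_mul_same (Φ x)⟩

end NiessenMatrix

/-- Niessen's matrix `𝒜(x) = (1/(2 Im μ)) Φ(x)* (J/i) Φ(x)`, built from a fundamental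
matrix of `J y' = (B(x) + μ B₁(x)) y`, is Hermitian, its derivative is `Φ* B₁ Φ`, and it
is monotone nondecreasing (in the semidefinite order) when `B₁` is positive semidefinite. -/
theorem niessen_matrix_monotone
    (n : ℕ) (hn : 1 ≤ n) (c d : ℝ) (hcd : c < d)
    (B B₁ : ℝ → Matrix (Fin n ⊕ Fin n) (Fin n ⊕ Fin n) ℂ)
    (μ : ℂ) (hτ : μ.im ≠ 0)
    (Φ Φ' : ℝ → Matrix (Fin n ⊕ Fin n) (Fin n ⊕ Fin n) ℂ)
    (hBcont : ∀ i j, ContinuousOn (fun x => B x i j) (Set.Icc c d))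
    (hB₁cont : ∀ i j, ContinuousOn (fun x => B₁ x i j) (Set.Icc c d))
    (hBherm : ∀ x ∈ Set.Icc c d, (B x).IsHermitian)
    (hB₁herm : ∀ x ∈ Set.Icc c d, (B₁ x).IsHermitian)
    (hΦ : ∀ x ∈ Set.Icc c d, ∀ i j,
      HasDerivWithinAt (fun t => Φ t i j) (Φ' x i j) (Set.Icc c d) x)
    (hΦ'cont : ∀ i j, ContinuousOn (fun x => Φ' x i j) (Set.Icc c d))
    (hode : ∀ x ∈ Set.Icc c d, symJ n * Φ' x = (B x + μ • B₁ x) * Φ x)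
    (A : ℝ → Matrix (Fin n ⊕ Fin n) (Fin n ⊕ Fin n) ℂ)
    (hA : ∀ x, A x = (1 / (2 * (μ.im : ℂ))) • ((Φ x)ᴴ * (Complex.I⁻¹ • symJ n) * Φ x)) :
    (∀ x ∈ Set.Icc c d, (A x).IsHermitian)
    ∧ (∀ x ∈ Set.Icc c d, ∀ i j,
        HasDerivWithinAt (fun t => A t i j) (((Φ x)ᴴ * B₁ x * Φ x) i j) (Set.Icc c d) x)
    ∧ ((∀ x ∈ Set.Icc c d, (B₁ x).PosSemidef) →
        ∀ x₁ ∈ Set.Icc c d, ∀ x₂ ∈ Set.Icc c d, x₁ ≤ x₂ → (A x₂ - A x₁).PosSemidef) := by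
  obtain rfl : A = fun x => niessenMatrix (symJ n) μ (Φ x) := funext hA
  obtain ⟨hherm, hderiv, hmono⟩ := niessen_matrix_monotone_general (conjTranspose_symJ n)
    (convex_Icc c d) hτ hBherm hB₁herm hΦ hode
  exact ⟨fun x _ => hherm x, hderiv, fun hpos _ h₁ _ h₂ h =>
    hmono (fun x hx => hpos x (interior_subset hx)) h₁ h₂ h⟩
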